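/- Let m, n ≥ 1 and let x, a, b₁, b₂ be real numbers; write |b|² = b₁² + b₂². Let K be the mn×mn complex matrix K = I_n ⊗ T_m(−a, x, a) + T_n(−b₁ + i·b₂, 0, b₁ + i·b₂) ⊗ J_m. Then det K = [ ∏_{j=1}^{⌊m/2⌋} ∏_{k=1}^{⌊n/2⌋} ( x² + 4a² cos²(jπ/(m+1)) + 4|b|² cos²(kπ/(n+1)) ) ]² · c(m,n), where c(m,n) = 1 if m and n are both even; c(m,n) = Y_m(a, 0; x) if m is even and n is odd; c(m,n) = Y_n(b₁, b₂; x) if m is odd and n is even; and c(m,n) = x · Y_m(a, 0; x) · Y_n(b₁, b₂; x) if m and n are both odd. Here Y_m(b, c; x) = ∏_{j=1}^{⌊m/2⌋} ( x² + 4(b² + c²) cos²(jπ/(m+1)) ). -/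

import Mathlib

open Matrix Kronecker Real Finset

/-- The `n × n` tridiagonal Toeplitz matrix with `c₀` on the diagonal, `c₁` on the
superdiagonal and `c₋₁` on the subdiagonal. -/
def triToeplitz (n : ℕ) (cm c0 cp : ℂ) : Matrix (Fin n) (Fin n) ℂ :=
  Matrix.of fun j k =>
    if j = k then c0
    else if (j : ℕ) + 1 = (k : ℕ) then cp
    else if (k : ℕ) + 1 = (j : ℕ) then cm
    else 0

/-- The `m × m` antidiagonal matrix of ones. -/
def antiDiagOnes (m : ℕ) : Matrix (Fin m) (Fin m) ℂ :=
  Matrix.of fun j k => if (j : ℕ) + (k : ℕ) + 1 = m then 1 else 0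

/-- `Y_m(b, c; x) = ∏_{j=1}^{⌊m/2⌋} (x² + 4(b²+c²) cos²(jπ/(m+1)))`. -/
noncomputable def Y (m : ℕ) (b c x : ℝ) : ℝ :=
  ∏ j ∈ Finset.Icc 1 (m / 2),
    (x ^ 2 + 4 * (b ^ 2 + c ^ 2) * Real.cos ((j : ℝ) * Real.pi / ((m : ℝ) + 1)) ^ 2)

/-!
Write `K = x + M`. The antidiagonal matrix `J` is an involution anticommuting with the skew
tridiagonal matrix `S`, so the cross terms of `M² = (1 ⊗ S + B ⊗ J)²` cancel and `M²` is the
Kronecker sum of `B²` and `S²`, whose eigenvalues are explicit. Conjugation by alternating signs,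
on the first tensor factor as well when `m` is odd, takes `M` to `-M`. Hence `charpoly M` is even
or odd, its square is `charpoly (M²)` evaluated at `X²`, and a monic polynomial is determined by
its square. The factors of that square come in groups of four, because `j ↦ m + 1 - j` preserves
`cos² (jπ/(m+1))`, except at the middle index when `m` or `n` is odd; those exceptions make up the
factor `c(m, n)`.
-/

section

open Polynomial

section LinearAlgebra

theorem isConj_smul {R A : Type*} [SMul R A] [Monoid A] [IsScalarTower R A A] [SMulCommClass R A A]
    {x y : A} (r : R) (h : IsConj x y) : IsConj (r • x) (r • y) := by
  obtain ⟨u, hu⟩ := h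
  exact ⟨u, by rw [SemiconjBy, mul_smul_comm, smul_mul_assoc, hu.eq]⟩

theorem kronecker_neg {R l m n p : Type*} [NonUnitalNonAssocRing R] (A : Matrix l m R)
    (B : Matrix n p R) : A ⊗ₖ (-B) = -(A ⊗ₖ B) :=
  ext fun _ _ => mul_neg _ _

theorem neg_kronecker {R l m n p : Type*} [NonUnitalNonAssocRing R] (A : Matrix l m R)
    (B : Matrix n p R) : (-A) ⊗ₖ B = -(A ⊗ₖ B) :=
  ext fun _ _ => neg_mul _ _

variable {R ι κ : Type*} [CommRing R]

/-- The Kronecker sum of two square matrices; its eigenvalues are the sums of an eigenvalue of `A`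
and an eigenvalue of `B`. -/
def kroneckerSum [DecidableEq ι] [DecidableEq κ] (A : Matrix ι ι R) (B : Matrix κ κ R) :
    Matrix (ι × κ) (ι × κ) R :=
  A ⊗ₖ 1 + 1 ⊗ₖ B

theorem kroneckerSum_diagonal [DecidableEq ι] [DecidableEq κ] (d : ι → R) (e : κ → R) :
    kroneckerSum (diagonal d) (diagonal e) = diagonal fun p => d p.1 + e p.2 := by
  simp only [kroneckerSum, ← diagonal_one, diagonal_kronecker_diagonal, diagonal_add, mul_one,
    one_mul]

variable [Fintype ι] [Fintype κ]

theorem semiconjBy_kronecker {P A A' : Matrix ι ι R} {Q B B' : Matrix κ κ R}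
    (hA : SemiconjBy P A A') (hB : SemiconjBy Q B B') :
    SemiconjBy (P ⊗ₖ Q) (A ⊗ₖ B) (A' ⊗ₖ B') := by
  rw [SemiconjBy, ← mul_kronecker_mul, ← mul_kronecker_mul, hA.eq, hB.eq]

variable [DecidableEq ι] [DecidableEq κ]

theorem charpoly_eq_of_isConj {A B : Matrix ι ι R} (h : IsConj A B) : A.charpoly = B.charpoly := by
  obtain ⟨U, hU⟩ := h
  rw [← charpoly_units_conj U A, hU.eq, mul_assoc, ← coe_units_inv, Units.mul_inv, mul_one]

theorem charpoly_sq_eq_expand {A : Matrix ι ι R} (h : IsConj A (-A)) :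
    A.charpoly ^ 2 = expand R 2 (A ^ 2).charpoly := by
  have hmul : charmatrix A * charmatrix (-A) = (expand R 2).mapMatrix (charmatrix (A ^ 2)) := by
    have hX := scalar_commute (X : R[X]) (fun _ => Commute.all _ _) (C.mapMatrix A)
    have hX2 : (expand R 2).mapMatrix (scalar ι (X : R[X])) = scalar ι (X : R[X]) ^ 2 := by
      simp [diagonal_map, diagonal_pow, Pi.pow_def]
    have hC : (expand R 2).mapMatrix (C.mapMatrix (A ^ 2)) = C.mapMatrix A ^ 2 := by
      rw [← map_pow]
      ext1 i j
      simp
    simp only [charmatrix, map_neg, sub_neg_eq_add]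
    rw [map_sub, hX2, hC, sq, sq, hX.mul_self_sub_mul_self_eq']
  calc A.charpoly ^ 2 = A.charpoly * (-A).charpoly := by rw [sq, ← charpoly_eq_of_isConj h]
    _ = expand R 2 (A ^ 2).charpoly := by
      rw [charpoly, charpoly, charpoly, ← det_mul, hmul, AlgHom.map_det]

theorem isUnit_kronecker {P : Matrix ι ι R} {Q : Matrix κ κ R} (hP : IsUnit P) (hQ : IsUnit Q) :
    IsUnit (P ⊗ₖ Q) := by
  rw [isUnit_iff_isUnit_det] at *
  rw [det_kronecker]
  exact (hP.pow _).mul (hQ.pow _)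

theorem isConj_kroneckerSum {A A' : Matrix ι ι R} {B B' : Matrix κ κ R}
    (hA : IsConj A A') (hB : IsConj B B') :
    IsConj (kroneckerSum A B) (kroneckerSum A' B') := by
  obtain ⟨P, hP⟩ := hA
  obtain ⟨Q, hQ⟩ := hB
  exact ⟨(isUnit_kronecker P.isUnit Q.isUnit).unit,
    (semiconjBy_kronecker hP (.one_right _)).add_right (semiconjBy_kronecker (.one_right _) hQ)⟩

theorem one_kronecker_add_kronecker_sq {S J : Matrix κ κ R} (hJ : J * J = 1)
    (hSJ : SemiconjBy J S (-S)) (B : Matrix ι ι R) :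
    ((1 : Matrix ι ι R) ⊗ₖ S + B ⊗ₖ J) ^ 2 = kroneckerSum (B ^ 2) (S ^ 2) := by
  have hcross : B ⊗ₖ (J * S) = -(B ⊗ₖ (S * J)) := by
    rw [eq_neg_iff_add_eq_zero, ← kronecker_add, hSJ.eq, neg_mul, neg_add_cancel, kronecker_zero]
  simp only [kroneckerSum, sq, add_mul, mul_add, ← mul_kronecker_mul, one_mul, mul_one, hJ, hcross]
  abel

theorem isConj_diagonal_of_semiconjBy {K : Type*} [Field K] {A P : Matrix ι ι K} {d : ι → K}
    (hd : Function.Injective d) (hcol : ∀ p, P.col p ≠ 0) (hP : SemiconjBy P (diagonal d) A) :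
    IsConj (diagonal d) A := by
  have hvec : ∀ p, Module.End.HasEigenvector (Matrix.toLin' A) (d p) (P.col p) := by
    intro p
    rw [Module.End.hasEigenvector_iff, Module.End.mem_eigenspace_iff]
    refine ⟨?_, hcol p⟩
    ext j
    have := congrFun (congrFun hP.eq j) p
    rw [mul_diagonal, mul_comm] at this
    exact this.symm
  have hunit : IsUnit P := linearIndependent_cols_iff_isUnit.1
    (Module.End.eigenvectors_linearIndependent' (Matrix.toLin' A) d hd P.col hvec)
  exact ⟨hunit.unit, hP⟩

theorem isUnit_diagonal_pow {r : R} (hr : IsUnit r) (n : ℕ) :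
    IsUnit (diagonal fun j : Fin n => r ^ (j : ℕ)) :=
  isUnit_diagonal.2 (Pi.isUnit_iff.2 fun _ => hr.pow _)

end LinearAlgebra

theorem monic_eq_of_sq_eq_sq {R : Type*} [CommRing R] [NoZeroDivisors R] {p q : R[X]}
    (hp : p.Monic) (hq : q.Monic) (h : p ^ 2 = q ^ 2) : p = q := by
  rcases sq_eq_sq_iff_eq_or_eq_neg.1 h with rfl | rfl
  · rfl
  · have hneg : (-1 : R) = 1 := by simpa [hq.leadingCoeff] using hp.leadingCoeff
    rw [← neg_one_mul, ← C_1, ← C_neg, hneg, C_1, one_mul]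

theorem prod_fin_eq_of_symm {M : Type*} [CommMonoid M] {n : ℕ} {g : ℕ → M}
    (hg : ∀ j ∈ Icc 1 n, g (n + 1 - j) = g j) :
    ∏ p : Fin n, g (p + 1) =
      (∏ j ∈ Icc 1 (n / 2), g j) ^ 2 * if Even n then 1 else g ((n + 1) / 2) := by
  have hIcc : ∀ t, ∏ j ∈ Icc 1 t, g j = ∏ i ∈ range t, g (i + 1) := by
    intro t
    rw [range_eq_Ico, prod_Ico_add' g 0 t 1]
    rfl
  have hhalf : ∀ t s, 2 * t + s = n →
      ∏ i ∈ range t, g (t + s + i + 1) = ∏ i ∈ range t, g (i + 1) := by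
    intro t s hn
    rw [← prod_range_reflect]
    refine prod_congr rfl fun i hi => ?_
    have hit := mem_range.1 hi
    rw [← hg (i + 1) (mem_Icc.2 ⟨by omega, by omega⟩)]
    congr 1
    omega
  rw [Fin.prod_univ_eq_prod_range (fun i => g (i + 1)) n, hIcc]
  rcases n.even_or_odd' with ⟨t, rfl | rfl⟩
  · have := hhalf t 0 rfl
    rw [if_pos (even_two_mul t), mul_one, two_mul, prod_range_add, ← two_mul,
      Nat.mul_div_cancel_left t two_pos, sq]
    exact congrArg _ this
  · have := hhalf t 1 rfl
    rw [if_neg (by simp), show (2 * t + 1) / 2 = t by omega,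
      show (2 * t + 1 + 1) / 2 = t + 1 by omega, show 2 * t + 1 = (t + 1) + t by omega,
      prod_range_add, prod_range_succ, this, sq, mul_right_comm]

/-- The angle `jπ/(n+1)`: the path on `n` vertices has adjacency eigenvalues
`2 cos (pathAngle n j)` for `1 ≤ j ≤ n`. -/
noncomputable def pathAngle (n j : ℕ) : ℝ := j * π / (n + 1)

theorem cos_pathAngle_reflect {n j : ℕ} (hj : j ∈ Icc 1 n) :
    cos (pathAngle n (n + 1 - j)) = -cos (pathAngle n j) := by
  rw [← cos_pi_sub]
  congr 1
  have hjn : j ≤ n + 1 := by have := mem_Icc.1 hj; omega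
  unfold pathAngle
  push_cast [hjn]
  field_simp

theorem cos_pathAngle_middle {n : ℕ} (hn : ¬ Even n) : cos (pathAngle n ((n + 1) / 2)) = 0 := by
  obtain ⟨t, rfl⟩ := Nat.not_even_iff_odd.1 hn
  rw [← cos_pi_div_two, show (2 * t + 1 + 1) / 2 = t + 1 by omega]
  congr 1
  unfold pathAngle
  push_cast
  field_simp
  ring

theorem prod_comp_cos_pathAngle_sq {M : Type*} [CommMonoid M] (n : ℕ) (f : ℝ → M) :
    ∏ p : Fin n, f (cos (pathAngle n (p + 1)) ^ 2) =
      (∏ j ∈ Icc 1 (n / 2), f (cos (pathAngle n j) ^ 2)) ^ 2 * if Even n then 1 else f 0 := by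
  rw [prod_fin_eq_of_symm (g := fun j => f (cos (pathAngle n j) ^ 2))
    fun j hj => by rw [cos_pathAngle_reflect hj, neg_sq]]
  split_ifs with hn
  · rfl
  · rw [cos_pathAngle_middle hn, zero_pow two_ne_zero]

theorem triToeplitz_eq_smul_one_add (n : ℕ) (cm c0 cp : ℂ) :
    triToeplitz n cm c0 cp = c0 • 1 + triToeplitz n cm 0 cp := by
  ext j k
  by_cases h : j = k <;> simp [triToeplitz, h]

theorem neg_triToeplitz (n : ℕ) (cm c0 cp : ℂ) :
    -triToeplitz n cm c0 cp = triToeplitz n (-cm) (-c0) (-cp) := by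
  ext j k
  rw [neg_apply]
  simp only [triToeplitz, of_apply]
  split_ifs <;> simp only [neg_zero]

theorem smul_triToeplitz (n : ℕ) (β cm c0 cp : ℂ) :
    β • triToeplitz n cm c0 cp = triToeplitz n (β * cm) (β * c0) (β * cp) := by
  ext j k
  simp [triToeplitz]

theorem semiconjBy_diagonal_pow_triToeplitz (n : ℕ) (r cm c0 cp : ℂ) :
    SemiconjBy (diagonal fun j : Fin n => r ^ (j : ℕ))
      (triToeplitz n cm c0 (r * cp)) (triToeplitz n (r * cm) c0 cp) := by
  ext j k
  simp only [triToeplitz, diagonal_mul, mul_diagonal, of_apply]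
  split_ifs with h₀ h₁ h₂
  · rw [h₀, mul_comm]
  · rw [← h₁]; ring
  · rw [← h₂]; ring
  · simp

theorem triToeplitz_mulVec (n : ℕ) (cm c0 cp : ℂ) {f : ℕ → ℂ} (hf₀ : f 0 = 0)
    (hfn : f (n + 1) = 0) (j : Fin n) :
    (triToeplitz n cm c0 cp *ᵥ fun k => f (k + 1)) j =
      cm * f j + c0 * f (j + 1) + cp * f (j + 2) := by
  let t : ℕ → ℂ := fun i =>
    (if i = j then cm else 0) + (if i = j + 1 then c0 else 0) + if i = j + 2 then cp else 0
  have ht : ∀ k : Fin n, triToeplitz n cm c0 cp j k = t (k + 1) := by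
    intro k
    simp only [triToeplitz, of_apply, t, Fin.ext_iff]
    split_ifs <;> first | omega | simp
  calc (triToeplitz n cm c0 cp *ᵥ fun k => f (k + 1)) j
      = ∑ k : Fin n, t (k + 1) * f (k + 1) := by simp only [mulVec, dotProduct, ht]
    _ = ∑ i ∈ range (n + 2), t i * f i := by
      rw [sum_range_succ, sum_range_succ', hf₀, hfn, mul_zero, mul_zero, add_zero, add_zero,
        Fin.sum_univ_eq_sum_range fun i => t (i + 1) * f (i + 1)]
    _ = cm * f j + c0 * f (j + 1) + cp * f (j + 2) := by
      have hj := j.isLt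
      have h0 : (j : ℕ) < n + 2 := by omega
      have h1 : (j : ℕ) < n + 1 := by omega
      simp [t, add_mul, sum_add_distrib, h0, h1, hj]

/-- The matrix whose columns are the eigenvectors of the path on `n` vertices; with indices in
`Fin n` shifted by one, its `(j, p)` entry is `sin (jpπ/(n+1))`. -/
noncomputable def sineMatrix (n : ℕ) : Matrix (Fin n) (Fin n) ℂ :=
  of fun j p => (sin ((j + 1) * pathAngle n (p + 1)) : ℂ)

theorem sin_succ_mul_pathAngle (n j : ℕ) : sin ((n + 1) * pathAngle n j) = 0 := by
  rw [pathAngle, mul_div_cancel₀ _ (by positivity), sin_nat_mul_pi]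

theorem semiconjBy_sineMatrix (n : ℕ) :
    SemiconjBy (sineMatrix n) (diagonal fun p : Fin n => ((2 * cos (pathAngle n (p + 1)) : ℝ) : ℂ))
      (triToeplitz n 1 0 1) := by
  ext j p
  let f : ℕ → ℂ := fun i => ((sin (i * pathAngle n (p + 1)) : ℝ) : ℂ)
  have hf : (triToeplitz n 1 0 1 * sineMatrix n) j p = f j + f (j + 2) := by
    have := triToeplitz_mulVec n 1 0 1 (f := f) (by simp [f])
      (by simpa [f] using congrArg Complex.ofReal (sin_succ_mul_pathAngle n (p + 1))) j
    simpa [f, sineMatrix, mulVec, dotProduct, mul_apply] using this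
  rw [hf, mul_diagonal, sineMatrix, of_apply]
  have hsin : sin (j * pathAngle n (p + 1)) + sin ((j + 2) * pathAngle n (p + 1)) =
      sin ((j + 1) * pathAngle n (p + 1)) * (2 * cos (pathAngle n (p + 1))) := by
    generalize pathAngle n (p + 1) = θ
    rw [show (j : ℝ) * θ = (j + 1) * θ - θ by ring,
      show ((j : ℝ) + 2) * θ = (j + 1) * θ + θ by ring, sin_sub, sin_add]
    ring
  simpa only [f, Nat.cast_add, Nat.cast_ofNat, Complex.ofReal_add, Complex.ofReal_mul] using
    congrArg Complex.ofReal hsin.symm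

theorem mem_Ioo_pathAngle {n j : ℕ} (hj : j ∈ Icc 1 n) : pathAngle n j ∈ Set.Ioo 0 π := by
  obtain ⟨h1, hn⟩ := mem_Icc.1 hj
  have hj0 : (0 : ℝ) < j := by exact_mod_cast h1
  have hjn : (j : ℝ) < n + 1 := by exact_mod_cast Nat.lt_succ_of_le hn
  refine ⟨div_pos (mul_pos hj0 pi_pos) (by positivity), ?_⟩
  rw [pathAngle, div_lt_iff₀ (by positivity), mul_comm π]
  gcongr

theorem cos_pathAngle_injective (n : ℕ) :
    Function.Injective fun p : Fin n => cos (pathAngle n (p + 1)) := by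
  intro p q hpq
  have hmem : ∀ p : Fin n, pathAngle n (p + 1) ∈ Set.Icc 0 π := fun p =>
    Set.Ioo_subset_Icc_self (mem_Ioo_pathAngle (mem_Icc.2 ⟨by omega, p.isLt⟩))
  have hangle := injOn_cos (hmem p) (hmem q) hpq
  unfold pathAngle at hangle
  field_simp at hangle
  have hsucc : (p : ℕ) + 1 = q + 1 := by exact_mod_cast hangle
  exact Fin.ext (Nat.succ_injective hsucc)

theorem isConj_diagonal_triToeplitz_one (n : ℕ) :
    IsConj (diagonal fun p : Fin n => ((2 * cos (pathAngle n (p + 1)) : ℝ) : ℂ))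
      (triToeplitz n 1 0 1) := by
  refine isConj_diagonal_of_semiconjBy ?_ ?_ (semiconjBy_sineMatrix n)
  · intro p q hpq
    exact cos_pathAngle_injective n (mul_left_cancel₀ two_ne_zero (Complex.ofReal_injective hpq))
  · intro p hp
    have hn : 0 < n := p.pos
    have hsin : sin (pathAngle n (p + 1)) = 0 := by
      simpa [sineMatrix, -Complex.ofReal_sin] using congrFun hp ⟨0, hn⟩
    obtain ⟨hpos, hlt⟩ := mem_Ioo_pathAngle (n := n) (j := p + 1) (mem_Icc.2 ⟨by omega, p.isLt⟩)
    exact (sin_pos_of_pos_of_lt_pi hpos hlt).ne' hsin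

theorem isConj_diagonal_triToeplitz {r : ℂ} (hr : r ≠ 0) (n : ℕ) (c : ℂ) :
    IsConj (diagonal fun p : Fin n => r * c * ((2 * cos (pathAngle n (p + 1)) : ℝ) : ℂ))
      (triToeplitz n (r * (r * c)) 0 c) := by
  have hscale := isConj_smul (r * c) (isConj_diagonal_triToeplitz_one n)
  rw [← diagonal_smul, smul_triToeplitz, mul_zero, mul_one] at hscale
  exact hscale.trans ⟨(isUnit_diagonal_pow hr.isUnit n).unit,
    semiconjBy_diagonal_pow_triToeplitz n r (r * c) 0 c⟩

theorem exists_ne_zero_mul_mul_eq {K : Type*} [Field K] [IsAlgClosed K] {w z : K}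
    (h : w = 0 ↔ z = 0) : ∃ r ≠ 0, r * (r * z) = w := by
  rcases eq_or_ne z 0 with rfl | hz
  · exact ⟨1, one_ne_zero, by simp [h.2 rfl]⟩
  · obtain ⟨r, hr⟩ := IsAlgClosed.exists_pow_nat_eq (w / z) two_pos
    refine ⟨r, ?_, by rw [← mul_assoc, ← sq, hr, div_mul_cancel₀ _ hz]⟩
    rintro rfl
    rw [zero_pow two_ne_zero] at hr
    exact div_ne_zero (mt h.1 hz) hz hr.symm

theorem isConj_diagonal_triToeplitz_sq (n : ℕ) {w z : ℂ} (h : w = 0 ↔ z = 0) :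
    IsConj (diagonal fun p : Fin n => 4 * (w * z) * ((cos (pathAngle n (p + 1)) ^ 2 : ℝ) : ℂ))
      (triToeplitz n w 0 z ^ 2) := by
  obtain ⟨r, hr, rfl⟩ := exists_ne_zero_mul_mul_eq h
  have hsq := (isConj_diagonal_triToeplitz hr n z).pow 2
  rw [diagonal_pow] at hsq
  refine (congrArg (fun d => IsConj (diagonal d) _) ?_).mp hsq
  funext p
  simp only [Pi.pow_apply]
  push_cast
  ring

theorem antiDiagOnes_eq_submatrix (m : ℕ) :
    antiDiagOnes m = (1 : Matrix (Fin m) (Fin m) ℂ).submatrix Fin.revPerm (Equiv.refl _) := by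
  ext j k
  simp only [antiDiagOnes, of_apply, submatrix_apply, one_apply, Fin.ext_iff, Fin.revPerm_apply,
    Fin.val_rev, Equiv.refl_apply]
  congr 1
  apply propext
  omega

theorem antiDiagOnes_mul {m : ℕ} (A : Matrix (Fin m) (Fin m) ℂ) :
    antiDiagOnes m * A = A.submatrix Fin.rev id := by
  rw [antiDiagOnes_eq_submatrix, one_submatrix_mul]
  rfl

theorem mul_antiDiagOnes {m : ℕ} (A : Matrix (Fin m) (Fin m) ℂ) :
    A * antiDiagOnes m = A.submatrix id Fin.rev := by
  rw [antiDiagOnes_eq_submatrix, mul_submatrix_one]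
  rfl

theorem antiDiagOnes_mul_self (m : ℕ) : antiDiagOnes m * antiDiagOnes m = 1 := by
  rw [antiDiagOnes_mul, antiDiagOnes_eq_submatrix, submatrix_submatrix]
  ext j k
  simp [one_apply]

theorem semiconjBy_antiDiagOnes_triToeplitz (m : ℕ) (cm c0 cp : ℂ) :
    SemiconjBy (antiDiagOnes m) (triToeplitz m cm c0 cp) (triToeplitz m cp c0 cm) := by
  rw [SemiconjBy, antiDiagOnes_mul, mul_antiDiagOnes]
  ext j k
  simp only [submatrix_apply, id, triToeplitz, of_apply, Fin.ext_iff, Fin.val_rev]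
  split_ifs <;> first | rfl | omega

theorem semiconjBy_diagonal_neg_one_pow_antiDiagOnes (m : ℕ) :
    SemiconjBy (diagonal fun j : Fin m => (-1 : ℂ) ^ (j : ℕ)) (antiDiagOnes m)
      ((-1 : ℂ) ^ (m + 1) • antiDiagOnes m) := by
  ext j k
  simp only [diagonal_mul, mul_diagonal, Matrix.smul_apply, antiDiagOnes, of_apply]
  split_ifs with h
  · have hm : m + 1 = j + 2 * 1 + k := by omega
    have hk : (-1 : ℂ) ^ (k : ℕ) * (-1) ^ (k : ℕ) = 1 := by
      rw [← mul_pow, neg_one_mul, neg_neg, one_pow]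
    rw [hm, pow_add, pow_add, pow_mul, neg_one_sq, one_pow, mul_one, smul_eq_mul, mul_one,
      mul_assoc, hk, mul_one]
  · simp

theorem semiconjBy_diagonal_neg_one_pow_triToeplitz (n : ℕ) (cm cp : ℂ) :
    SemiconjBy (diagonal fun j : Fin n => (-1 : ℂ) ^ (j : ℕ)) (triToeplitz n cm 0 cp)
      (-triToeplitz n cm 0 cp) := by
  have h := semiconjBy_diagonal_pow_triToeplitz n (-1) cm 0 (-cp)
  rwa [neg_one_mul, neg_neg, neg_one_mul, ← neg_zero, ← neg_triToeplitz, neg_zero] at h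

/-- The complex adjacency matrix of the dicot `𝒬^{(v)}_{m,n}` with vertex weight `0`. -/
noncomputable def dicotSkewMatrix (m n : ℕ) (a b₁ b₂ : ℝ) :
    Matrix (Fin n × Fin m) (Fin n × Fin m) ℂ :=
  1 ⊗ₖ triToeplitz m (-a) 0 a +
    triToeplitz n (-b₁ + Complex.I * b₂) 0 (b₁ + Complex.I * b₂) ⊗ₖ antiDiagOnes m

theorem isConj_dicotSkewMatrix_neg (m n : ℕ) (a b₁ b₂ : ℝ) :
    IsConj (dicotSkewMatrix m n a b₁ b₂) (-dicotSkewMatrix m n a b₁ b₂) := by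
  have hS := semiconjBy_diagonal_neg_one_pow_triToeplitz m (-a) a
  have hB := semiconjBy_diagonal_neg_one_pow_triToeplitz n (-b₁ + Complex.I * b₂)
    (b₁ + Complex.I * b₂)
  have hJ := semiconjBy_diagonal_neg_one_pow_antiDiagOnes m
  have hunit := isUnit_diagonal_pow (isUnit_one (M := ℂ)).neg
  rw [dicotSkewMatrix, neg_add]
  rcases m.even_or_odd with hm | hm
  · rw [hm.add_one.neg_one_pow, neg_one_smul] at hJ
    refine ⟨(isUnit_kronecker isUnit_one (hunit m)).unit, SemiconjBy.add_right ?_ ?_⟩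
    · rw [← kronecker_neg]
      exact semiconjBy_kronecker (.one_right 1) hS
    · rw [← kronecker_neg]
      exact semiconjBy_kronecker (.one_left _) hJ
  · rw [hm.add_one.neg_one_pow, one_smul] at hJ
    refine ⟨(isUnit_kronecker (hunit n) (hunit m)).unit, SemiconjBy.add_right ?_ ?_⟩
    · rw [← kronecker_neg]
      exact semiconjBy_kronecker (.one_right _) hS
    · rw [← neg_kronecker]
      exact semiconjBy_kronecker hB hJ

theorem isConj_diagonal_dicotSkewMatrix_sq (m n : ℕ) (a b₁ b₂ : ℝ) :
    IsConj (diagonal fun p : Fin n × Fin m =>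
        ((-(4 * a ^ 2 * cos (pathAngle m (p.2 + 1)) ^ 2 +
          4 * (b₁ ^ 2 + b₂ ^ 2) * cos (pathAngle n (p.1 + 1)) ^ 2) : ℝ) : ℂ))
      (dicotSkewMatrix m n a b₁ b₂ ^ 2) := by
  have hJS : SemiconjBy (antiDiagOnes m) (triToeplitz m (-a) 0 a) (-triToeplitz m (-a) 0 a) := by
    rw [neg_triToeplitz, neg_neg, neg_zero]
    exact semiconjBy_antiDiagOnes_triToeplitz m (-a) 0 a
  have hS := isConj_diagonal_triToeplitz_sq m (neg_eq_zero (a := (a : ℂ)))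
  have hB := isConj_diagonal_triToeplitz_sq n
    (w := -b₁ + Complex.I * b₂) (z := b₁ + Complex.I * b₂) (by simp [Complex.ext_iff])
  have hsum := isConj_kroneckerSum hB hS
  rw [kroneckerSum_diagonal] at hsum
  rw [dicotSkewMatrix, one_kronecker_add_kronecker_sq (antiDiagOnes_mul_self m) hJS]
  refine (congrArg (fun d => IsConj (diagonal d) _) ?_).mp hsum
  funext p
  push_cast
  linear_combination
    4 * (b₂ : ℂ) ^ 2 * Complex.cos (pathAngle n (p.1 + 1)) ^ 2 * Complex.I_sq

/-- The product `Y m b c x` as a polynomial in `x`. -/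
noncomputable def yPoly (m : ℕ) (b c : ℝ) : ℝ[X] :=
  ∏ j ∈ Icc 1 (m / 2), (X ^ 2 + C (4 * (b ^ 2 + c ^ 2) * cos (pathAngle m j) ^ 2))

/-- The product formula for the partition function of the dicot `𝒬^{(v)}_{m,n}`, as a polynomial in
the vertex weight. -/
noncomputable def partitionPoly (m n : ℕ) (a b₁ b₂ : ℝ) : ℝ[X] :=
  (∏ j ∈ Icc 1 (m / 2), ∏ k ∈ Icc 1 (n / 2),
      (X ^ 2 + C (4 * a ^ 2 * cos (pathAngle m j) ^ 2 +
        4 * (b₁ ^ 2 + b₂ ^ 2) * cos (pathAngle n k) ^ 2))) ^ 2 *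
    if Even m then (if Even n then 1 else yPoly m a 0)
    else (if Even n then yPoly n b₁ b₂ else X * yPoly m a 0 * yPoly n b₁ b₂)

theorem monic_yPoly (m : ℕ) (b c : ℝ) : (yPoly m b c).Monic :=
  monic_prod_of_monic _ _ fun _ _ => monic_X_pow_add_C _ two_ne_zero

theorem monic_partitionPoly (m n : ℕ) (a b₁ b₂ : ℝ) : (partitionPoly m n a b₁ b₂).Monic := by
  refine ((monic_prod_of_monic _ _ fun _ _ => monic_prod_of_monic _ _ fun _ _ =>
    monic_X_pow_add_C _ two_ne_zero).pow 2).mul ?_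
  split_ifs
  · exact monic_one
  · exact monic_yPoly m a 0
  · exact monic_yPoly n b₁ b₂
  · exact (monic_X.mul (monic_yPoly m a 0)).mul (monic_yPoly n b₁ b₂)

theorem prod_eq_partitionPoly_sq (m n : ℕ) (a b₁ b₂ : ℝ) :
    ∏ p : Fin n × Fin m, (X ^ 2 + C (4 * a ^ 2 * cos (pathAngle m (p.2 + 1)) ^ 2 +
      4 * (b₁ ^ 2 + b₂ ^ 2) * cos (pathAngle n (p.1 + 1)) ^ 2)) =
      partitionPoly m n a b₁ b₂ ^ 2 := by
  let W (s t : ℝ) : ℝ[X] := X ^ 2 + C (4 * a ^ 2 * s + 4 * (b₁ ^ 2 + b₂ ^ 2) * t)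
  let F (s : ℝ) : ℝ[X] :=
    (∏ k ∈ Icc 1 (n / 2), W s (cos (pathAngle n k) ^ 2)) ^ 2 * if Even n then 1 else W s 0
  calc _ = ∏ j : Fin m, ∏ k : Fin n,
          W (cos (pathAngle m (j + 1)) ^ 2) (cos (pathAngle n (k + 1)) ^ 2) :=
        Fintype.prod_prod_type_right _
    _ = ∏ j : Fin m, F (cos (pathAngle m (j + 1)) ^ 2) :=
        prod_congr rfl fun j _ => prod_comp_cos_pathAngle_sq n (W (cos (pathAngle m (j + 1)) ^ 2))
    _ = (∏ j ∈ Icc 1 (m / 2), F (cos (pathAngle m j) ^ 2)) ^ 2 * if Even m then 1 else F 0 :=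
        prod_comp_cos_pathAngle_sq m F
    _ = partitionPoly m n a b₁ b₂ ^ 2 := by
        simp only [F, partitionPoly]
        split_ifs <;>
          simp only [W, yPoly, prod_mul_distrib, prod_pow, mul_one, mul_zero, zero_add, add_zero,
            zero_pow two_ne_zero, C_0] <;>
          ring

theorem eval_yPoly (m : ℕ) (b c x : ℝ) : (yPoly m b c).eval x = Y m b c x := by
  simp [yPoly, Y, pathAngle, eval_prod]

theorem eval_partitionPoly (m n : ℕ) (a b₁ b₂ x : ℝ) :
    (partitionPoly m n a b₁ b₂).eval x =
      (∏ j ∈ Icc 1 (m / 2), ∏ k ∈ Icc 1 (n / 2),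
          (x ^ 2 + 4 * a ^ 2 * cos (pathAngle m j) ^ 2 +
            4 * (b₁ ^ 2 + b₂ ^ 2) * cos (pathAngle n k) ^ 2)) ^ 2 *
        if Even m then (if Even n then 1 else Y m a 0 x)
        else (if Even n then Y n b₁ b₂ x else x * Y m a 0 x * Y n b₁ b₂ x) := by
  simp only [partitionPoly, eval_mul, eval_pow, apply_ite (eval x), eval_prod, eval_add, eval_X,
    eval_C, eval_one, eval_yPoly, add_assoc]

theorem charpoly_dicotSkewMatrix (m n : ℕ) (a b₁ b₂ : ℝ) :
    (dicotSkewMatrix m n a b₁ b₂).charpoly =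
      (partitionPoly m n a b₁ b₂).map Complex.ofRealHom := by
  refine monic_eq_of_sq_eq_sq (charpoly_monic _) ((monic_partitionPoly ..).map _) ?_
  rw [charpoly_sq_eq_expand (isConj_dicotSkewMatrix_neg m n a b₁ b₂),
    ← charpoly_eq_of_isConj (isConj_diagonal_dicotSkewMatrix_sq m n a b₁ b₂), charpoly_diagonal,
    ← Polynomial.map_pow, ← prod_eq_partitionPoly_sq, Polynomial.map_prod, map_prod]
  refine prod_congr rfl fun p _ => ?_
  rw [Complex.ofReal_neg, C_neg, sub_neg_eq_add, map_add, expand_X, expand_C, Polynomial.map_add,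
    Polynomial.map_pow, map_X, map_C, Complex.ofRealHom_eq_coe]

theorem det_smul_one_add_dicotSkewMatrix (m n : ℕ) (x a b₁ b₂ : ℝ) :
    ((x : ℂ) • 1 + dicotSkewMatrix m n a b₁ b₂).det =
      ((partitionPoly m n a b₁ b₂).eval x : ℝ) := by
  calc ((x : ℂ) • 1 + dicotSkewMatrix m n a b₁ b₂).det
      = (-dicotSkewMatrix m n a b₁ b₂).charpoly.eval (x : ℂ) := by
        rw [eval_charpoly, sub_neg_eq_add, scalar_apply, smul_one_eq_diagonal]
    _ = (dicotSkewMatrix m n a b₁ b₂).charpoly.eval (x : ℂ) := by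
        rw [charpoly_eq_of_isConj (isConj_dicotSkewMatrix_neg m n a b₁ b₂)]
    _ = (partitionPoly m n a b₁ b₂).eval x := by
        rw [charpoly_dicotSkewMatrix, eval_map, ← Complex.ofRealHom_eq_coe, eval₂_hom,
          Complex.ofRealHom_eq_coe]

end

theorem gridDicot_partition_function (m n : ℕ) (hm : 1 ≤ m) (hn : 1 ≤ n)
    (x a b₁ b₂ : ℝ) :
    ((1 : Matrix (Fin n) (Fin n) ℂ) ⊗ₖ triToeplitz m (-(a:ℂ)) (x:ℂ) (a:ℂ)
      + triToeplitz n (-(b₁:ℂ) + Complex.I * (b₂:ℂ)) 0 ((b₁:ℂ) + Complex.I * (b₂:ℂ))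
          ⊗ₖ antiDiagOnes m).det
    = (((∏ j ∈ Finset.Icc 1 (m / 2), ∏ k ∈ Finset.Icc 1 (n / 2),
          (x ^ 2 + 4 * a ^ 2 * Real.cos ((j : ℝ) * Real.pi / ((m : ℝ) + 1)) ^ 2
            + 4 * (b₁ ^ 2 + b₂ ^ 2) * Real.cos ((k : ℝ) * Real.pi / ((n : ℝ) + 1)) ^ 2)) ^ 2
        * (if Even m then (if Even n then 1 else Y m a 0 x)
           else (if Even n then Y n b₁ b₂ x else x * Y m a 0 x * Y n b₁ b₂ x)) : ℝ) : ℂ) := by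
  have hK : (1 : Matrix (Fin n) (Fin n) ℂ) ⊗ₖ triToeplitz m (-(a:ℂ)) (x:ℂ) (a:ℂ)
      + triToeplitz n (-(b₁:ℂ) + Complex.I * (b₂:ℂ)) 0 ((b₁:ℂ) + Complex.I * (b₂:ℂ))
          ⊗ₖ antiDiagOnes m = (x : ℂ) • 1 + dicotSkewMatrix m n a b₁ b₂ := by
    rw [dicotSkewMatrix, triToeplitz_eq_smul_one_add, kronecker_add, kronecker_smul,
      one_kronecker_one, add_assoc]
  rw [hK, det_smul_one_add_dicotSkewMatrix, eval_partitionPoly]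
  simp only [pathAngle]
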